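/- arXiv:2008.00114 — 2 statements merged into one kernel-verified Lean document; each statement's English description precedes it below -/
import Mathlib

section
/- Assume (M₁), (M₂) and (f₁). Then there exist ρ ∈ (0,1] and α > 0 such that I(u) ≥ α for every u ∈ C_c^∞(Ω) with ‖∇u‖_𝓗 = ρ. -/
open MeasureTheory
open scoped NNReal RealInnerProductSpace

/-- The `𝓗`-modular: `ϱ_𝓗(w) = ∫_Ω (|w|^p + a(x)|w|^q) dx`. -/
noncomputable def rhoH {N : ℕ} (Ω : Set (EuclideanSpace ℝ (Fin N))) (p q : ℝ)
    (a w : EuclideanSpace ℝ (Fin N) → ℝ) : ℝ :=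
  ∫ x in Ω, (|w x| ^ p + a x * |w x| ^ q)

/-- The Luxemburg norm `‖w‖_𝓗 = inf {λ > 0 : ϱ_𝓗(w/λ) ≤ 1}`. -/
noncomputable def luxH {N : ℕ} (Ω : Set (EuclideanSpace ℝ (Fin N))) (p q : ℝ)
    (a w : EuclideanSpace ℝ (Fin N) → ℝ) : ℝ :=
  sInf {l : ℝ | 0 < l ∧ rhoH Ω p q a (fun x => w x / l) ≤ 1}

/-- `Ω` has Lipschitz boundary: near each boundary point there are a unit direction `v`
and a Lipschitz function `φ`, constant in the direction `v`, such that locally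
`Ω = {y : φ(y) < ⟪y, v⟫}`. -/
def HasLipschitzBoundary {N : ℕ} (Ω : Set (EuclideanSpace ℝ (Fin N))) : Prop :=
  ∀ x ∈ frontier Ω, ∃ r : ℝ, 0 < r ∧ ∃ v : EuclideanSpace ℝ (Fin N), ‖v‖ = 1 ∧
    ∃ (K : ℝ≥0) (φ : EuclideanSpace ℝ (Fin N) → ℝ), LipschitzWith K φ ∧
      (∀ y : EuclideanSpace ℝ (Fin N), ∀ t : ℝ, φ (y + t • v) = φ y) ∧
      ∀ y ∈ Metric.ball x r, (y ∈ Ω ↔ φ y < ⟪y, v⟫)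

/-- `u` belongs to `C_c^∞(Ω)`: `u` is smooth, compactly supported, with support inside `Ω`. -/
def CcInfty {N : ℕ} (Ω : Set (EuclideanSpace ℝ (Fin N)))
    (u : EuclideanSpace ℝ (Fin N) → ℝ) : Prop :=
  ContDiff ℝ (⊤ : ℕ∞) u ∧ HasCompactSupport u ∧ tsupport u ⊆ Ω

/-!
If `t M(t) ≤ θ 𝓜(t)` then `𝓜(t) t^(-θ)` is nonincreasing, so `𝓜(t) ≥ 𝓜(1) t^θ` on `[0, 1]`. When
`‖∇u‖_𝓗 = ρ ≤ 1`, the modular of `∇u / ρ` equals `1`, hence `ρ^q ≤ ‖∇u‖_p^p + ‖∇u‖_{q,a}^q`, and the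
Kirchhoff part of `I(u)` is at least `c ρ^(qθ)`. The same modular identity gives `‖∇u‖_p ≤ ρ`, so by
Sobolev's inequality and `(f₁)` the reaction part is at most `ε C₁ ρ^(qθ) + δ_ε C₂ ρ^r`. Since
`qθ < r`, choosing first `ε` and then `ρ` small makes the Kirchhoff part win.
-/

open Set Filter Topology

theorem antitoneOn_mul_rpow_neg {F F' : ℝ → ℝ} {θ : ℝ} (hF : ∀ x, 0 < x → HasDerivAt F (F' x) x)
    (hF' : ∀ x, 0 < x → x * F' x ≤ θ * F x) : AntitoneOn (fun x ↦ F x * x ^ (-θ)) (Ioi 0) := by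
  have hderiv (x : ℝ) (hx : 0 < x) : HasDerivAt (fun y ↦ F y * y ^ (-θ))
      (F' x * x ^ (-θ) + F x * (-θ * x ^ (-θ - 1))) x :=
    (hF x hx).mul (Real.hasDerivAt_rpow_const (Or.inl hx.ne'))
  refine antitoneOn_of_deriv_nonpos (convex_Ioi 0) (HasDerivAt.continuousOn hderiv) ?_ ?_
  · rw [interior_Ioi]
    exact fun x hx ↦ (hderiv x hx).differentiableAt.differentiableWithinAt
  · rw [interior_Ioi]
    intro x (hx : 0 < x)
    calc deriv (fun y ↦ F y * y ^ (-θ)) x = (x * F' x - θ * F x) * (x ^ (-θ) / x) := by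
          rw [(hderiv x hx).deriv, Real.rpow_sub_one hx.ne']
          field_simp
          ring
      _ ≤ 0 := mul_nonpos_of_nonpos_of_nonneg (sub_nonpos.2 (hF' x hx)) (by positivity)

theorem hasDerivAt_integral_of_continuousOn_Ici {M : ℝ → ℝ} (hM : ContinuousOn M (Ici 0)) {x : ℝ}
    (hx : 0 < x) : HasDerivAt (fun y ↦ ∫ τ in (0 : ℝ)..y, M τ) (M x) x := by
  refine intervalIntegral.integral_hasDerivAt_right ?_ ?_ (hM.continuousAt (Ici_mem_nhds hx))
  · refine (hM.mono ?_).intervalIntegrable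
    rw [uIcc_of_le hx.le]
    exact Icc_subset_Ici_self
  · exact (hM.mono Ioi_subset_Ici_self).stronglyMeasurableAtFilter isOpen_Ioi x hx

theorem integral_mul_div_rpow_le_integral {M : ℝ → ℝ} (hM : ContinuousOn M (Ici 0)) {θ : ℝ}
    (hθ : θ ≠ 0) (hMθ : ∀ t, 0 ≤ t → t * M t ≤ θ * ∫ τ in (0 : ℝ)..t, M τ) {t T : ℝ} (ht : 0 ≤ t)
    (htT : t ≤ T) : (∫ τ in (0 : ℝ)..T, M τ) * (t / T) ^ θ ≤ ∫ τ in (0 : ℝ)..t, M τ := by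
  rcases ht.eq_or_lt with rfl | ht
  · simp [Real.zero_rpow hθ]
  have hT : 0 < T := ht.trans_le htT
  have hanti := antitoneOn_mul_rpow_neg
    (fun x hx ↦ hasDerivAt_integral_of_continuousOn_Ici hM hx) (fun x hx ↦ hMθ x hx.le) ht hT htT
  calc (∫ τ in (0 : ℝ)..T, M τ) * (t / T) ^ θ
      = (∫ τ in (0 : ℝ)..T, M τ) * T ^ (-θ) * t ^ θ := by
        rw [Real.div_rpow ht.le hT.le, Real.rpow_neg hT.le]
        ring
    _ ≤ (∫ τ in (0 : ℝ)..t, M τ) * t ^ (-θ) * t ^ θ := by gcongr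
    _ = ∫ τ in (0 : ℝ)..t, M τ := by
        rw [mul_assoc, ← Real.rpow_add ht, neg_add_cancel, Real.rpow_zero, mul_one]

theorem half_add_rpow_le_add_rpow {x y θ : ℝ} (hx : 0 ≤ x) (hy : 0 ≤ y) (hθ : 0 ≤ θ) :
    ((x + y) / 2) ^ θ ≤ x ^ θ + y ^ θ := by
  wlog hxy : x ≤ y generalizing x y
  · simpa only [add_comm] using this hy hx (le_of_not_ge hxy)
  calc ((x + y) / 2) ^ θ ≤ y ^ θ := by gcongr; linarith
    _ ≤ x ^ θ + y ^ θ := le_add_of_nonneg_left (by positivity)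

theorem exists_mem_Ioc_mul_rpow_le_mul_rpow {s r c : ℝ} (hsr : s < r) (hc : 0 < c) (B : ℝ) :
    ∃ ρ ∈ Ioc (0 : ℝ) 1, B * ρ ^ r ≤ c * ρ ^ s := by
  have hlim : Tendsto (fun ρ : ℝ ↦ B * ρ ^ (r - s)) (𝓝[>] 0) (𝓝 0) := by
    have hcont : ContinuousAt (fun ρ : ℝ ↦ B * ρ ^ (r - s)) 0 :=
      (Real.continuousAt_rpow_const _ _ (Or.inr (sub_pos.2 hsr).le)).const_mul B
    simpa [Real.zero_rpow (sub_pos.2 hsr).ne'] using hcont.tendsto.mono_left nhdsWithin_le_nhds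
  obtain ⟨ρ, hρ, hρmem⟩ :=
    ((hlim.eventually_lt_const hc).and (Ioc_mem_nhdsGT zero_lt_one)).exists
  refine ⟨ρ, hρmem, ?_⟩
  have hρ0 : 0 < ρ := hρmem.1
  calc B * ρ ^ r = B * ρ ^ (r - s) * ρ ^ s := by
        rw [mul_assoc, ← Real.rpow_add hρ0, sub_add_cancel]
    _ ≤ c * ρ ^ s := by gcongr

theorem apply_sInf_eq_of_antitoneOn {φ : ℝ → ℝ} {c : ℝ} (hφ : AntitoneOn φ (Ioi 0))
    (hcont : ContinuousOn φ (Ioi 0)) (hpos : 0 < sInf {l | 0 < l ∧ φ l ≤ c}) :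
    φ (sInf {l | 0 < l ∧ φ l ≤ c}) = c := by
  set S := {l | 0 < l ∧ φ l ≤ c}
  have hbdd : BddBelow S := ⟨0, fun l hl ↦ hl.1.le⟩
  -- `sInf ∅ = 0` for real sets.
  have hne : S.Nonempty := by
    by_contra! hS
    simp [hS] at hpos
  have hlim : Tendsto φ (𝓝 (sInf S)) (𝓝 (φ (sInf S))) := hcont.continuousAt (Ioi_mem_nhds hpos)
  apply le_antisymm
  · refine le_of_tendsto (hlim.mono_left (nhdsWithin_le_nhds (s := Ioi (sInf S)))) ?_
    filter_upwards [self_mem_nhdsWithin] with l hl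
    obtain ⟨l', hl', hlt⟩ := exists_lt_of_csInf_lt hne hl
    exact (hφ hl'.1 (hl'.1.trans hlt) hlt.le).trans hl'.2
  · refine ge_of_tendsto (hlim.mono_left (nhdsWithin_le_nhds (s := Iio (sInf S)))) ?_
    filter_upwards [self_mem_nhdsWithin, nhdsWithin_le_nhds (Ioi_mem_nhds hpos)] with l hl hl0
    by_contra! hlt
    exact (csInf_le hbdd ⟨hl0, hlt.le⟩).not_gt hl

theorem mul_half_add_rpow_le_kirchhoff {M : ℝ → ℝ} (hM : ContinuousOn M (Ici 0)) {θ : ℝ}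
    (hθ : 0 < θ) (hMθ : ∀ t, 0 ≤ t → t * M t ≤ θ * ∫ τ in (0 : ℝ)..t, M τ)
    (hM1 : 0 ≤ ∫ τ in (0 : ℝ)..1, M τ) {p q P Q : ℝ} (hp : 0 < p) (hpq : p ≤ q)
    (hP : P ∈ Icc (0 : ℝ) 1) (hQ : Q ∈ Icc (0 : ℝ) 1) :
    (∫ τ in (0 : ℝ)..1, M τ) / q * ((P + Q) / 2) ^ θ ≤
      1 / p * (∫ τ in (0 : ℝ)..P, M τ) + 1 / q * ∫ τ in (0 : ℝ)..Q, M τ := by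
  set m := ∫ τ in (0 : ℝ)..1, M τ
  have hq : 0 < q := hp.trans_le hpq
  have hlow (t : ℝ) (ht : t ∈ Icc (0 : ℝ) 1) : m * t ^ θ ≤ ∫ τ in (0 : ℝ)..t, M τ := by
    simpa only [div_one] using integral_mul_div_rpow_le_integral hM hθ.ne' hMθ ht.1 ht.2
  have hP0 : 0 ≤ P := hP.1
  calc m / q * ((P + Q) / 2) ^ θ ≤ m / q * (P ^ θ + Q ^ θ) := by
        gcongr
        exact half_add_rpow_le_add_rpow hP.1 hQ.1 hθ.le
    _ = 1 / q * (m * P ^ θ) + 1 / q * (m * Q ^ θ) := by ring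
    _ ≤ 1 / p * (m * P ^ θ) + 1 / q * (m * Q ^ θ) := by gcongr
    _ ≤ 1 / p * (∫ τ in (0 : ℝ)..P, M τ) + 1 / q * ∫ τ in (0 : ℝ)..Q, M τ := by
        gcongr
        exacts [hlow P hP, hlow Q hQ]

section Reaction

theorem norm_integral_le_rpow_add_rpow {E : Type*} [NormedAddCommGroup E] [NormedSpace ℝ E]
    {g : ℝ → E} {s r A B : ℝ} (hs : 0 < s) (hr : 0 < r)
    (hg : ∀ t, ‖g t‖ ≤ s * A * |t| ^ (s - 1) + r * B * |t| ^ (r - 1)) (t : ℝ) :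
    ‖∫ τ in (0 : ℝ)..t, g τ‖ ≤ A * |t| ^ s + B * |t| ^ r := by
  wlog ht : 0 ≤ t generalizing g t
  · simpa [intervalIntegral.integral_symm t 0] using
      this (g := fun τ ↦ g (-τ)) (fun τ ↦ by simpa using hg (-τ)) (-t) (by linarith)
  have hint {v : ℝ} (hv : 0 < v) (c : ℝ) :
      IntervalIntegrable (fun τ : ℝ ↦ v * c * τ ^ (v - 1)) volume 0 t :=
    (intervalIntegral.intervalIntegrable_rpow' (by linarith)).const_mul _
  have hval {v : ℝ} (hv : 0 < v) (c : ℝ) : ∫ τ in (0 : ℝ)..t, v * c * τ ^ (v - 1) = c * t ^ v := by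
    rw [intervalIntegral.integral_const_mul, integral_rpow (Or.inl (by linarith)), sub_add_cancel,
      Real.zero_rpow hv.ne']
    field_simp
    ring
  calc ‖∫ τ in (0 : ℝ)..t, g τ‖
      ≤ ∫ τ in (0 : ℝ)..t, (s * A * τ ^ (s - 1) + r * B * τ ^ (r - 1)) := by
        refine intervalIntegral.norm_integral_le_of_norm_le ht
          (.of_forall fun τ hτ ↦ ?_) ((hint hs A).add (hint hr B))
        simpa only [abs_of_pos hτ.1] using hg τ
    _ = A * |t| ^ s + B * |t| ^ r := by
        rw [intervalIntegral.integral_add (hint hs A) (hint hr B), hval hs, hval hr,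
          abs_of_nonneg ht]

variable {X : Type*} [MeasurableSpace X] {μ : Measure X} {f : X → ℝ → ℝ} {u : X → ℝ}

theorem aestronglyMeasurable_integral_of_caratheodory (hfmeas : ∀ t, Measurable fun x ↦ f x t)
    (hfcont : ∀ᵐ x ∂μ, Continuous (f x)) (hu : Measurable u) :
    AEStronglyMeasurable (fun x ↦ ∫ τ in (0 : ℝ)..u x, f x τ) μ := by
  obtain ⟨Y, hYμ, hY, hYcont⟩ := hfcont.exists_measurable_mem
  let g : ℝ → X → ℝ := fun t ↦ Y.indicator fun x ↦ f x t
  have hgcont (x : X) : Continuous fun t ↦ g t x := by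
    by_cases hx : x ∈ Y
    · simpa only [g, indicator_of_mem hx] using hYcont x hx
    · simpa only [g, indicator_of_notMem hx] using continuous_const
  have hg : Measurable (Function.uncurry g) :=
    measurable_uncurry_of_continuous_of_measurable hgcont fun t ↦ (hfmeas t).indicator hY
  have hscaled : StronglyMeasurable fun x ↦ ∫ σ in (0 : ℝ)..1, g (u x * σ) x := by
    simp only [intervalIntegral.integral_of_le zero_le_one]
    refine StronglyMeasurable.integral_prod_right' (f := fun z : X × ℝ ↦ g (u z.1 * z.2) z.1) ?_
    exact (hg.comp (((hu.comp measurable_fst).mul measurable_snd).prodMk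
      measurable_fst)).stronglyMeasurable
  -- On `Y`, substitute `τ = u x * σ` to integrate over a fixed interval.
  refine ⟨_, hu.stronglyMeasurable.mul hscaled, ?_⟩
  filter_upwards [hYμ] with x hx
  simp [g, indicator_of_mem hx]

variable {s r A B : ℝ}

theorem integrable_integral_of_caratheodory (hs : 0 < s) (hr : 0 < r)
    (hfmeas : ∀ t, Measurable fun x ↦ f x t) (hfcont : ∀ᵐ x ∂μ, Continuous (f x))
    (hf : ∀ᵐ x ∂μ, ∀ t, |f x t| ≤ s * A * |t| ^ (s - 1) + r * B * |t| ^ (r - 1))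
    (hu : Measurable u) (hus : Integrable (fun x ↦ |u x| ^ s) μ)
    (hur : Integrable (fun x ↦ |u x| ^ r) μ) :
    Integrable (fun x ↦ ∫ τ in (0 : ℝ)..u x, f x τ) μ := by
  refine ((hus.const_mul A).add (hur.const_mul B)).mono'
    (aestronglyMeasurable_integral_of_caratheodory hfmeas hfcont hu) ?_
  filter_upwards [hf] with x hx
  exact norm_integral_le_rpow_add_rpow hs hr hx (u x)

theorem integral_integral_le_of_abs_le_rpow (hs : 0 < s) (hr : 0 < r)
    (hf : ∀ᵐ x ∂μ, ∀ t, |f x t| ≤ s * A * |t| ^ (s - 1) + r * B * |t| ^ (r - 1))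
    (hus : Integrable (fun x ↦ |u x| ^ s) μ) (hur : Integrable (fun x ↦ |u x| ^ r) μ) :
    ∫ x, (∫ τ in (0 : ℝ)..u x, f x τ) ∂μ ≤ A * (∫ x, |u x| ^ s ∂μ) + B * ∫ x, |u x| ^ r ∂μ := by
  rw [← integral_const_mul, ← integral_const_mul,
    ← integral_add (hus.const_mul A) (hur.const_mul B)]
  refine (Real.le_norm_self _).trans
    (norm_integral_le_of_norm_le ((hus.const_mul A).add (hur.const_mul B)) ?_)
  filter_upwards [hf] with x hx
  exact norm_integral_le_rpow_add_rpow hs hr hx (u x)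

end Reaction

section Luxemburg

variable {N : ℕ} {Ω : Set (EuclideanSpace ℝ (Fin N))} {p q : ℝ}
  {a w : EuclideanSpace ℝ (Fin N) → ℝ}

theorem rhoH_div (hwp : IntegrableOn (fun x ↦ |w x| ^ p) Ω)
    (hwq : IntegrableOn (fun x ↦ a x * |w x| ^ q) Ω) {l : ℝ} (hl : 0 < l) :
    rhoH Ω p q a (fun x ↦ w x / l) =
      (∫ x in Ω, |w x| ^ p) / l ^ p + (∫ x in Ω, a x * |w x| ^ q) / l ^ q := by
  simp only [rhoH, abs_div, abs_of_pos hl, Real.div_rpow (abs_nonneg _) hl.le, ← mul_div_assoc]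
  rw [integral_add (hwp.div_const _) (hwq.div_const _), integral_div, integral_div]

theorem setIntegral_mul_abs_rpow_nonneg (ha : 0 ≤ᵐ[volume.restrict Ω] a) :
    0 ≤ ∫ x in Ω, a x * |w x| ^ q :=
  integral_nonneg_of_ae (ha.mono fun x hx ↦ mul_nonneg hx (by positivity))

theorem rhoH_div_luxH_eq_one (hp : 0 ≤ p) (hq : 0 ≤ q) (ha : 0 ≤ᵐ[volume.restrict Ω] a)
    (hwp : IntegrableOn (fun x ↦ |w x| ^ p) Ω) (hwq : IntegrableOn (fun x ↦ a x * |w x| ^ q) Ω)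
    (hw : 0 < luxH Ω p q a w) : rhoH Ω p q a (fun x ↦ w x / luxH Ω p q a w) = 1 := by
  have : 0 ≤ ∫ x in Ω, |w x| ^ p := integral_nonneg fun x ↦ by positivity
  have := setIntegral_mul_abs_rpow_nonneg (w := w) (q := q) ha
  refine apply_sInf_eq_of_antitoneOn (φ := fun l ↦ rhoH Ω p q a (fun x ↦ w x / l)) ?_ ?_ hw
  · intro l (hl : 0 < l) l' hl' hll'
    simp only [rhoH_div hwp hwq hl, rhoH_div hwp hwq hl']
    gcongr
  · refine ContinuousOn.congr ?_ fun l hl ↦ rhoH_div hwp hwq hl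
    have hpow (s : ℝ) : ContinuousOn (fun l : ℝ ↦ l ^ s) (Ioi 0) :=
      continuousOn_id.rpow_const fun l hl ↦ Or.inl (ne_of_gt hl)
    exact (continuousOn_const.div (hpow p) fun l hl ↦ (Real.rpow_pos_of_pos hl p).ne').add
      (continuousOn_const.div (hpow q) fun l hl ↦ (Real.rpow_pos_of_pos hl q).ne')

theorem integral_div_luxH_rpow_add_eq_one (hp : 0 ≤ p) (hq : 0 ≤ q)
    (ha : 0 ≤ᵐ[volume.restrict Ω] a) (hwp : IntegrableOn (fun x ↦ |w x| ^ p) Ω)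
    (hwq : IntegrableOn (fun x ↦ a x * |w x| ^ q) Ω) (hw : 0 < luxH Ω p q a w) :
    (∫ x in Ω, |w x| ^ p) / luxH Ω p q a w ^ p
      + (∫ x in Ω, a x * |w x| ^ q) / luxH Ω p q a w ^ q = 1 := by
  rw [← rhoH_div hwp hwq hw, rhoH_div_luxH_eq_one hp hq ha hwp hwq hw]

theorem integral_abs_rpow_le_luxH_rpow (hp : 0 ≤ p) (hq : 0 ≤ q)
    (ha : 0 ≤ᵐ[volume.restrict Ω] a) (hwp : IntegrableOn (fun x ↦ |w x| ^ p) Ω)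
    (hwq : IntegrableOn (fun x ↦ a x * |w x| ^ q) Ω) (hw : 0 < luxH Ω p q a w) :
    ∫ x in Ω, |w x| ^ p ≤ luxH Ω p q a w ^ p := by
  rw [← div_le_one (by positivity), ← integral_div_luxH_rpow_add_eq_one hp hq ha hwp hwq hw]
  exact le_add_of_nonneg_right
    (div_nonneg (setIntegral_mul_abs_rpow_nonneg ha) (by positivity))

theorem integral_mul_abs_rpow_le_luxH_rpow (hp : 0 ≤ p) (hq : 0 ≤ q)
    (ha : 0 ≤ᵐ[volume.restrict Ω] a) (hwp : IntegrableOn (fun x ↦ |w x| ^ p) Ω)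
    (hwq : IntegrableOn (fun x ↦ a x * |w x| ^ q) Ω) (hw : 0 < luxH Ω p q a w) :
    ∫ x in Ω, a x * |w x| ^ q ≤ luxH Ω p q a w ^ q := by
  rw [← div_le_one (by positivity), ← integral_div_luxH_rpow_add_eq_one hp hq ha hwp hwq hw]
  exact le_add_of_nonneg_left
    (div_nonneg (integral_nonneg fun x ↦ by positivity) (by positivity))

theorem luxH_rpow_le_integral_add_integral (hp : 0 ≤ p) (hpq : p ≤ q)
    (ha : 0 ≤ᵐ[volume.restrict Ω] a) (hwp : IntegrableOn (fun x ↦ |w x| ^ p) Ω)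
    (hwq : IntegrableOn (fun x ↦ a x * |w x| ^ q) Ω) (hw : luxH Ω p q a w ∈ Ioc (0 : ℝ) 1) :
    luxH Ω p q a w ^ q ≤ (∫ x in Ω, |w x| ^ p) + ∫ x in Ω, a x * |w x| ^ q := by
  obtain ⟨hw0, hw1⟩ := hw
  have hone := integral_div_luxH_rpow_add_eq_one hp (hp.trans hpq) ha hwp hwq hw0
  have hP : 0 ≤ ∫ x in Ω, |w x| ^ p := integral_nonneg fun x ↦ by positivity
  rw [← one_le_div (by positivity), add_div]
  refine hone.symm.le.trans ?_
  gcongr ?_ + _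
  exact div_le_div_of_nonneg_left hP (by positivity)
    (Real.rpow_le_rpow_of_exponent_ge hw0 hw1 hpq)

theorem mul_luxH_rpow_le_kirchhoff {M : ℝ → ℝ} (hM : ContinuousOn M (Ici 0)) {θ : ℝ}
    (hθ : 0 < θ) (hMθ : ∀ t, 0 ≤ t → t * M t ≤ θ * ∫ τ in (0 : ℝ)..t, M τ)
    (hM1 : 0 ≤ ∫ τ in (0 : ℝ)..1, M τ) (hp : 0 < p) (hpq : p ≤ q)
    (ha : 0 ≤ᵐ[volume.restrict Ω] a) (hwp : IntegrableOn (fun x ↦ |w x| ^ p) Ω)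
    (hwq : IntegrableOn (fun x ↦ a x * |w x| ^ q) Ω) (hw : luxH Ω p q a w ∈ Ioc (0 : ℝ) 1) :
    (∫ τ in (0 : ℝ)..1, M τ) / q * (1 / 2) ^ θ * luxH Ω p q a w ^ (q * θ) ≤
      1 / p * (∫ τ in (0 : ℝ)..(∫ x in Ω, |w x| ^ p), M τ)
        + 1 / q * ∫ τ in (0 : ℝ)..(∫ x in Ω, a x * |w x| ^ q), M τ := by
  have hq : 0 < q := hp.trans_le hpq
  have hlux_le (s : ℝ) (hs : 0 ≤ s) : luxH Ω p q a w ^ s ≤ 1 := Real.rpow_le_one hw.1.le hw.2 hs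
  have hP : ∫ x in Ω, |w x| ^ p ∈ Icc (0 : ℝ) 1 :=
    ⟨integral_nonneg fun x ↦ by positivity,
      (integral_abs_rpow_le_luxH_rpow hp.le hq.le ha hwp hwq hw.1).trans (hlux_le p hp.le)⟩
  have hQ : ∫ x in Ω, a x * |w x| ^ q ∈ Icc (0 : ℝ) 1 :=
    ⟨setIntegral_mul_abs_rpow_nonneg ha,
      (integral_mul_abs_rpow_le_luxH_rpow hp.le hq.le ha hwp hwq hw.1).trans (hlux_le q hq.le)⟩
  refine le_trans ?_ (mul_half_add_rpow_le_kirchhoff hM hθ hMθ hM1 hp hpq hP hQ)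
  have hlux : 0 ≤ luxH Ω p q a w ^ q := Real.rpow_nonneg hw.1.le q
  rw [mul_assoc, Real.rpow_mul hw.1.le, ← Real.mul_rpow (by norm_num) hlux, one_div_mul_eq_div]
  gcongr
  exact luxH_rpow_le_integral_add_integral hp.le hpq ha hwp hwq hw

end Luxemburg

section Sobolev

variable {E F : Type*} [NormedAddCommGroup E] [NormedSpace ℝ E] [FiniteDimensional ℝ E]
  [MeasurableSpace E] [BorelSpace E] [NormedAddCommGroup F] [NormedSpace ℝ F]
  [FiniteDimensional ℝ F]

theorem exists_integral_norm_rpow_le_integral_norm_fderiv_rpow (μ : Measure E)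
    [μ.IsAddHaarMeasure] {Ω : Set E} (hΩ : Bornology.IsBounded Ω) {p s : ℝ} (hp : 1 ≤ p)
    (hpE : p < Module.finrank ℝ E) (hs : 0 < s) (hps : p⁻¹ - (Module.finrank ℝ E : ℝ)⁻¹ ≤ s⁻¹) :
    ∃ C > (0 : ℝ), ∀ u : E → F, ContDiff ℝ 1 u → HasCompactSupport u → Function.support u ⊆ Ω →
      ∫ x, ‖u x‖ ^ s ∂μ ≤ C * (∫ x, ‖fderiv ℝ u x‖ ^ p ∂μ) ^ (s / p) := by
  have hp0 : 0 < p := by linarith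
  lift p to ℝ≥0 using hp0.le
  lift s to ℝ≥0 using hs.le
  let K : ℝ≥0 := eLpNormLESNormFDerivOfLeConst F μ Ω p s
  refine ⟨((K : ℝ) + 1) ^ (s : ℝ), by positivity, fun u hu hcpt hsupp ↦ ?_⟩
  set P := ∫ x, ‖fderiv ℝ u x‖ ^ (p : ℝ) ∂μ
  set S := ∫ x, ‖u x‖ ^ (s : ℝ) ∂μ
  have hP : 0 ≤ P := integral_nonneg fun x ↦ by positivity
  have hS : 0 ≤ S := integral_nonneg fun x ↦ by positivity
  have hsobolev : S ^ (s : ℝ)⁻¹ ≤ K * P ^ (p : ℝ)⁻¹ := by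
    have hnorm := eLpNorm_le_eLpNorm_fderiv_of_le μ hu hsupp (by exact_mod_cast hp)
      (by exact_mod_cast hpE) (by exact_mod_cast hps) hΩ
    rw [(hu.continuous.memLp_of_hasCompactSupport hcpt).eLpNorm_eq_integral_rpow_norm
        (by exact_mod_cast hs.ne') ENNReal.coe_ne_top,
      ((hu.continuous_fderiv one_ne_zero).memLp_of_hasCompactSupport
        (hcpt.fderiv ℝ)).eLpNorm_eq_integral_rpow_norm
        (by exact_mod_cast hp0.ne') ENNReal.coe_ne_top,
      ← ENNReal.ofReal_coe_nnreal (p := eLpNormLESNormFDerivOfLeConst F μ Ω p s),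
      ← ENNReal.ofReal_mul NNReal.zero_le_coe] at hnorm
    exact (ENNReal.ofReal_le_ofReal_iff (by positivity)).1 hnorm
  calc S = (S ^ (s : ℝ)⁻¹) ^ (s : ℝ) := (Real.rpow_inv_rpow hS hs.ne').symm
    _ ≤ ((K + 1) * P ^ (p : ℝ)⁻¹) ^ (s : ℝ) := by
        gcongr
        exact hsobolev.trans (by gcongr; exact le_add_of_nonneg_right zero_le_one)
    _ = (K + 1) ^ (s : ℝ) * P ^ ((s : ℝ) / p) := by
        rw [Real.mul_rpow (by positivity) (by positivity), ← Real.rpow_mul hP, inv_mul_eq_div]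

end Sobolev

section TestFunctions

theorem integrable_norm_rpow_of_hasCompactSupport {X F : Type*} [TopologicalSpace X]
    [MeasurableSpace X] [OpensMeasurableSpace X] {μ : Measure X} [IsFiniteMeasureOnCompacts μ]
    [NormedAddCommGroup F] {g : X → F} (hg : Continuous g) (hcpt : HasCompactSupport g) {s : ℝ} (hs : 0 < s) :
    Integrable (fun x ↦ ‖g x‖ ^ s) μ :=
  (hg.norm.rpow_const fun _ ↦ Or.inr hs.le).integrable_of_hasCompactSupport
    (hcpt.comp_left (g := fun t ↦ ‖t‖ ^ s) (by simp [Real.zero_rpow hs.ne']))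

variable {N : ℕ} {Ω : Set (EuclideanSpace ℝ (Fin N))} {u a : EuclideanSpace ℝ (Fin N) → ℝ}

namespace CcInfty

theorem continuous_fderiv (hu : CcInfty Ω u) : Continuous (fderiv ℝ u) :=
  hu.1.continuous_fderiv (by simp)

theorem integrable_abs_rpow (hu : CcInfty Ω u) {s : ℝ} (hs : 0 < s) :
    Integrable (fun x ↦ |u x| ^ s) :=
  integrable_norm_rpow_of_hasCompactSupport hu.1.continuous hu.2.1 hs

theorem integrable_norm_fderiv_rpow (hu : CcInfty Ω u) {s : ℝ} (hs : 0 < s) :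
    Integrable (fun x ↦ ‖fderiv ℝ u x‖ ^ s) :=
  integrable_norm_rpow_of_hasCompactSupport hu.continuous_fderiv (hu.2.1.fderiv ℝ) hs

theorem integrableOn_mul_norm_fderiv_rpow (hu : CcInfty Ω u) (ha : IntegrableOn a Ω) {s : ℝ}
    (hs : 0 ≤ s) : IntegrableOn (fun x ↦ a x * ‖fderiv ℝ u x‖ ^ s) Ω := by
  obtain ⟨C, hC⟩ := hu.continuous_fderiv.bounded_above_of_compact_support (hu.2.1.fderiv ℝ)
  refine Integrable.mul_bdd (c := C ^ s) ha
    (hu.continuous_fderiv.norm.rpow_const fun _ ↦ Or.inr hs).aestronglyMeasurable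
    (.of_forall fun x ↦ ?_)
  rw [Real.norm_of_nonneg (by positivity)]
  gcongr
  exact hC x

theorem setIntegral_norm_fderiv_rpow (hu : CcInfty Ω u) {s : ℝ} (hs : s ≠ 0) :
    ∫ x in Ω, ‖fderiv ℝ u x‖ ^ s = ∫ x, ‖fderiv ℝ u x‖ ^ s := by
  refine setIntegral_eq_integral_of_forall_compl_eq_zero fun x hx ↦ ?_
  rw [fderiv_of_notMem_tsupport ℝ fun h ↦ hx (hu.2.2 h), norm_zero, Real.zero_rpow hs]

end CcInfty

theorem exists_integral_abs_rpow_le_luxH_rpow (hΩ : Bornology.IsBounded Ω)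
    (ha : 0 ≤ᵐ[volume.restrict Ω] a) (haint : IntegrableOn a Ω) {p q s : ℝ} (hp : 1 ≤ p)
    (hpN : p < N) (hq : 0 ≤ q) (hs : 0 < s) (hsp : s ≤ N * p / (N - p)) :
    ∃ C > (0 : ℝ), ∀ u, CcInfty Ω u → 0 < luxH Ω p q a (fun x ↦ ‖fderiv ℝ u x‖) →
      ∫ x in Ω, |u x| ^ s ≤ C * luxH Ω p q a (fun x ↦ ‖fderiv ℝ u x‖) ^ s := by
  have hp0 : 0 < p := by linarith
  have hN : (0 : ℝ) < N := hp0.trans hpN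
  have hps : p⁻¹ - (N : ℝ)⁻¹ ≤ s⁻¹ := by
    have hconj : p⁻¹ - (N : ℝ)⁻¹ = (N * p / (N - p))⁻¹ := by field_simp
    rw [hconj]
    exact inv_anti₀ hs hsp
  obtain ⟨C, hC, hsobolev⟩ := exists_integral_norm_rpow_le_integral_norm_fderiv_rpow (F := ℝ)
    (volume : Measure (EuclideanSpace ℝ (Fin N))) hΩ hp (by simpa using hpN) hs
    (by simpa using hps)
  refine ⟨C, hC, fun u hu hlux ↦ ?_⟩
  set ρ := luxH Ω p q a (fun x ↦ ‖fderiv ℝ u x‖)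
  have hgrad : ∫ x in Ω, ‖fderiv ℝ u x‖ ^ p ≤ ρ ^ p := by
    simpa only [abs_norm] using integral_abs_rpow_le_luxH_rpow hp0.le hq ha
      (by simpa only [abs_norm] using (hu.integrable_norm_fderiv_rpow hp0).integrableOn)
      (by simpa only [abs_norm] using hu.integrableOn_mul_norm_fderiv_rpow haint hq) hlux
  calc ∫ x in Ω, |u x| ^ s ≤ ∫ x, ‖u x‖ ^ s :=
        setIntegral_le_integral (hu.integrable_abs_rpow hs) (.of_forall fun x ↦ by positivity)
    _ ≤ C * (∫ x, ‖fderiv ℝ u x‖ ^ p) ^ (s / p) :=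
        hsobolev u (hu.1.of_le (by simp)) hu.2.1 ((subset_tsupport u).trans hu.2.2)
    _ ≤ C * (ρ ^ p) ^ (s / p) := by
        rw [← hu.setIntegral_norm_fderiv_rpow hp0.ne']
        gcongr
    _ = C * ρ ^ s := by rw [← Real.rpow_mul hlux.le, mul_div_cancel₀ s hp0.ne']

theorem exists_integral_integral_le_luxH_rpow (hΩ : Bornology.IsBounded Ω)
    (ha : 0 ≤ᵐ[volume.restrict Ω] a) (haint : IntegrableOn a Ω) {p q s r : ℝ} (hp : 1 ≤ p)
    (hpN : p < N) (hq : 0 ≤ q) (hs : 0 < s) (hsp : s ≤ N * p / (N - p)) (hr : 0 < r)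
    (hrp : r ≤ N * p / (N - p)) {f : EuclideanSpace ℝ (Fin N) → ℝ → ℝ}
    (hf : ∀ ε > (0 : ℝ), ∃ δ > (0 : ℝ), ∀ᵐ x ∂volume.restrict Ω, ∀ t : ℝ,
      |f x t| ≤ s * ε * |t| ^ (s - 1) + r * δ * |t| ^ (r - 1)) {ε : ℝ} (hε : 0 < ε) :
    ∃ B : ℝ, ∀ u, CcInfty Ω u → 0 < luxH Ω p q a (fun x ↦ ‖fderiv ℝ u x‖) →
      ∫ x in Ω, ∫ τ in (0 : ℝ)..u x, f x τ ≤
        ε * luxH Ω p q a (fun x ↦ ‖fderiv ℝ u x‖) ^ s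
          + B * luxH Ω p q a (fun x ↦ ‖fderiv ℝ u x‖) ^ r := by
  obtain ⟨C₁, hC₁, hsob₁⟩ :=
    exists_integral_abs_rpow_le_luxH_rpow hΩ ha haint hp hpN hq hs hsp
  obtain ⟨C₂, -, hsob₂⟩ := exists_integral_abs_rpow_le_luxH_rpow hΩ ha haint hp hpN hq hr hrp
  obtain ⟨δ, hδ, hfδ⟩ := hf (ε / C₁) (by positivity)
  refine ⟨δ * C₂, fun u hu hlux ↦ ?_⟩
  set ρ := luxH Ω p q a (fun x ↦ ‖fderiv ℝ u x‖)
  calc ∫ x in Ω, ∫ τ in (0 : ℝ)..u x, f x τ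
      ≤ ε / C₁ * (∫ x in Ω, |u x| ^ s) + δ * ∫ x in Ω, |u x| ^ r :=
        integral_integral_le_of_abs_le_rpow hs hr hfδ (hu.integrable_abs_rpow hs).integrableOn
          (hu.integrable_abs_rpow hr).integrableOn
    _ ≤ ε / C₁ * (C₁ * ρ ^ s) + δ * (C₂ * ρ ^ r) := by
        gcongr
        exacts [hsob₁ u hu hlux, hsob₂ u hu hlux]
    _ = ε * ρ ^ s + δ * C₂ * ρ ^ r := by field_simp

end TestFunctions

-- Without the integrability conjunct the last integral could be the junk value `0`.
theorem stmt_14_general {N : ℕ} {Ω : Set (EuclideanSpace ℝ (Fin N))} (hΩ : Bornology.IsBounded Ω)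
    {p q : ℝ} (hp : 1 ≤ p) (hpq : p ≤ q) (hpN : p < N) {a : EuclideanSpace ℝ (Fin N) → ℝ}
    (haint : IntegrableOn a Ω) (ha : 0 ≤ᵐ[volume.restrict Ω] a)
    {M : ℝ → ℝ} (hM : ContinuousOn M (Ici 0)) {θ : ℝ} (hθ : 0 < θ)
    (hMθ : ∀ t, 0 ≤ t → t * M t ≤ θ * ∫ τ in (0 : ℝ)..t, M τ) (hM1 : 0 < M 1)
    {f : EuclideanSpace ℝ (Fin N) → ℝ → ℝ} (hfmeas : ∀ t, Measurable fun x ↦ f x t)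
    (hfcont : ∀ᵐ x ∂volume.restrict Ω, Continuous (f x))
    {r : ℝ} (hr : q * θ < r) (hrp : r ≤ N * p / (N - p))
    (hf : ∀ ε > (0 : ℝ), ∃ δ > (0 : ℝ), ∀ᵐ x ∂volume.restrict Ω, ∀ t : ℝ,
      |f x t| ≤ q * θ * ε * |t| ^ (q * θ - 1) + r * δ * |t| ^ (r - 1)) :
    ∃ ρ ∈ Ioc (0 : ℝ) 1, ∃ α > (0 : ℝ), ∀ u, CcInfty Ω u →
      luxH Ω p q a (fun x ↦ ‖fderiv ℝ u x‖) = ρ →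
      IntegrableOn (fun x ↦ ∫ τ in (0 : ℝ)..u x, f x τ) Ω ∧
      α ≤ 1 / p * (∫ τ in (0 : ℝ)..(∫ x in Ω, ‖fderiv ℝ u x‖ ^ p), M τ)
          + 1 / q * (∫ τ in (0 : ℝ)..(∫ x in Ω, a x * ‖fderiv ℝ u x‖ ^ q), M τ)
          - ∫ x in Ω, ∫ τ in (0 : ℝ)..u x, f x τ := by
  have hp0 : 0 < p := by linarith
  have hq0 : 0 < q := hp0.trans_le hpq
  have hs0 : 0 < q * θ := by positivity
  have hr0 : 0 < r := hs0.trans hr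
  have hm : 0 < ∫ τ in (0 : ℝ)..1, M τ :=
    pos_of_mul_pos_right (hM1.trans_le (by simpa using hMθ 1 zero_le_one)) hθ.le
  set c := (∫ τ in (0 : ℝ)..1, M τ) / q * (1 / 2) ^ θ
  have hc : 0 < c / 4 := by positivity
  obtain ⟨B, hreaction⟩ := exists_integral_integral_le_luxH_rpow hΩ ha haint hp hpN hq0.le hs0
    (hr.le.trans hrp) hr0 hrp hf hc
  obtain ⟨ρ, hρ, hρr⟩ := exists_mem_Ioc_mul_rpow_le_mul_rpow hr hc B
  have hρ0 : 0 < ρ := hρ.1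
  refine ⟨ρ, hρ, c / 2 * ρ ^ (q * θ), by positivity, fun u hu hlux ↦ ⟨?_, ?_⟩⟩
  · obtain ⟨δ, -, hfδ⟩ := hf 1 one_pos
    exact integrable_integral_of_caratheodory hs0 hr0 hfmeas hfcont hfδ hu.1.continuous.measurable
      (hu.integrable_abs_rpow hs0).integrableOn (hu.integrable_abs_rpow hr0).integrableOn
  · have hkirchhoff := mul_luxH_rpow_le_kirchhoff (w := fun x ↦ ‖fderiv ℝ u x‖) hM hθ hMθ hm.le hp0
      hpq ha (by simpa only [abs_norm] using (hu.integrable_norm_fderiv_rpow hp0).integrableOn)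
      (by simpa only [abs_norm] using hu.integrableOn_mul_norm_fderiv_rpow haint hq0.le)
      (hlux ▸ hρ)
    simp only [abs_norm, hlux] at hkirchhoff
    have hF := hreaction u hu (hlux ▸ hρ0)
    rw [hlux] at hF
    linarith

/-- Lemma 4.1: under `(M₁)`, `(M₂)`, `(f₁)`, there are `ρ ∈ (0,1]` and `α > 0` such that
`I(u) ≥ α` whenever `u ∈ C_c^∞(Ω)` and `‖∇u‖_𝓗 = ρ`, where
`I(u) = (1/p)𝓜(‖∇u‖_p^p) + (1/q)𝓜(‖∇u‖_{q,a}^q) − ∫_Ω F(x,u)dx`. -/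
theorem stmt_14 {N : ℕ} (hN : 2 ≤ N) (Ω : Set (EuclideanSpace ℝ (Fin N)))
    (hΩo : IsOpen Ω) (hΩne : Ω.Nonempty) (hΩbd : Bornology.IsBounded Ω)
    (hΩlip : HasLipschitzBoundary Ω)
    (p q : ℝ) (hp : 1 < p) (hpq : p < q) (hqN : q < N) (hpqN : q / p < 1 + 1 / N)
    (a : EuclideanSpace ℝ (Fin N) → ℝ) (Ka : ℝ≥0)
    (haLip : LipschitzOnWith Ka a (closure Ω)) (ha0 : ∀ x ∈ closure Ω, 0 ≤ a x)
    -- (M₁)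
    (M : ℝ → ℝ) (hMc : ContinuousOn M (Set.Ici 0)) (hM0 : ∀ t, 0 ≤ t → 0 ≤ M t)
    (θ : ℝ) (hθ1 : 1 ≤ θ) (hθ2 : θ < (N * p / (N - p)) / q)
    (hM1 : ∀ t, 0 ≤ t → t * M t ≤ θ * ∫ τ in (0:ℝ)..t, M τ)
    -- (M₂)
    (hM2 : ∀ τ : ℝ, 0 < τ → ∃ κ > (0:ℝ), ∀ t, τ ≤ t → κ ≤ M t)
    -- f Carathéodory
    (f : EuclideanSpace ℝ (Fin N) → ℝ → ℝ)
    (hfmeas : ∀ t : ℝ, Measurable fun x => f x t)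
    (hfcont : ∀ᵐ x ∂(volume.restrict Ω), Continuous (f x))
    -- (f₁)
    (r : ℝ) (hr1 : q * θ < r) (hr2 : r < N * p / (N - p))
    (hf1 : ∀ ε > (0:ℝ), ∃ δ > (0:ℝ), ∀ᵐ x ∂(volume.restrict Ω), ∀ t : ℝ,
      |f x t| ≤ q * θ * ε * |t| ^ (q * θ - 1) + r * δ * |t| ^ (r - 1)) :
    ∃ ρ : ℝ, ρ ∈ Set.Ioc (0:ℝ) 1 ∧ ∃ α > (0:ℝ),
      ∀ u : EuclideanSpace ℝ (Fin N) → ℝ, CcInfty Ω u →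
        luxH Ω p q a (fun x => ‖fderiv ℝ u x‖) = ρ →
        α ≤ (1 / p) * (∫ τ in (0:ℝ)..(∫ x in Ω, ‖fderiv ℝ u x‖ ^ p), M τ)
            + (1 / q) * (∫ τ in (0:ℝ)..(∫ x in Ω, a x * ‖fderiv ℝ u x‖ ^ q), M τ)
            - ∫ x in Ω, ∫ τ in (0:ℝ)..(u x), f x τ := by
  obtain ⟨κ, hκ, hMκ⟩ := hM2 1 one_pos
  obtain ⟨ρ, hρ, α, hα, H⟩ := stmt_14_general hΩbd hp.le hpq.le (hpq.trans hqN)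
    ((haLip.continuousOn.integrableOn_compact hΩbd.isCompact_closure).mono_set subset_closure)
    (ae_restrict_of_forall_mem hΩo.measurableSet fun x hx ↦ ha0 x (subset_closure hx)) hMc
    (zero_lt_one.trans_le hθ1) hM1 (hκ.trans_le (hMκ 1 le_rfl)) hfmeas hfcont hr1 hr2.le hf1
  exact ⟨ρ, hρ, α, hα, fun u hu hlux ↦ (H u hu hlux).2⟩
end

section
/- Assume (M₁), (M₂), (f₁) and (f₂), and assume in addition that a is not almost everywhere equal to 0 on Ω. Then there exists e ∈ C_c^∞(Ω) such that I(e) < 0, ‖∇e‖_p ≥ 1 and ‖∇e‖_{q,a} ≥ 1. -/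
open MeasureTheory
open scoped NNReal RealInnerProductSpace

/-!
The idea is that `I(tu) → -∞` as `t → ∞` for a suitable bump function `u`. The condition
`t M(t) ≤ θ 𝓜(t)` integrates to `𝓜(t) ≤ C t ^ θ`, so the two gradient terms of `I(tu)` are at most
of order `t ^ (pθ)` and `t ^ (qθ)`; the Ambrosetti–Rabinowitz condition `σ F ≤ t f` integrates to
`F(x, t) ≥ c₁ t ^ σ - c₂`, so `∫ F(x, tu)` is at least of order `t ^ σ`, and `σ > qθ`. Choosing `u`
supported where `a > 0` makes both `‖∇u‖_p` and `‖∇u‖_{q,a}` positive, so that they exceed `1` after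
scaling.
-/

open Filter Set Asymptotics

section Growth

lemma isLittleO_rpow_rpow_atTop {α β : ℝ} (h : α < β) :
    (fun t : ℝ => t ^ α) =o[atTop] fun t : ℝ => t ^ β := by
  refine isLittleO_of_tendsto' ?_ ?_
  · filter_upwards [eventually_gt_atTop 0] with t ht hzero
    exact absurd hzero (Real.rpow_pos_of_pos ht β).ne'
  · refine (tendsto_rpow_neg_atTop (sub_pos.2 h)).congr' ?_
    filter_upwards [eventually_gt_atTop 0] with t ht
    rw [neg_sub, Real.rpow_sub ht]

lemma tendsto_rpow_add_rpow_add_const_sub_rpow_atBot {α β σ c : ℝ} (hα : α < σ) (hβ : β < σ)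
    (hσ : 0 < σ) (hc : 0 < c) (k₁ k₂ k₃ : ℝ) :
    Tendsto (fun t : ℝ => k₁ * t ^ α + k₂ * t ^ β + k₃ - c * t ^ σ) atTop atBot := by
  have hlower : (fun t : ℝ => k₁ * t ^ α + k₂ * t ^ β + k₃) =o[atTop] fun t : ℝ => t ^ σ := by
    refine (((isLittleO_rpow_rpow_atTop hα).const_mul_left k₁).add
      ((isLittleO_rpow_rpow_atTop hβ).const_mul_left k₂)).add ?_
    simpa using (isLittleO_rpow_rpow_atTop hσ).const_mul_left k₃
  have hequiv : (fun t : ℝ => k₁ * t ^ α + k₂ * t ^ β + k₃ - c * t ^ σ) ~[atTop]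
      fun t : ℝ => -c * t ^ σ := by
    refine (hlower.const_mul_right (neg_ne_zero.2 hc.ne')).congr_left fun t => ?_
    simp only [Pi.sub_apply]
    ring
  exact hequiv.symm.tendsto_atBot
    ((tendsto_rpow_atTop hσ).const_mul_atTop_of_neg (neg_neg_of_pos hc))

lemma le_mul_div_rpow_of_mul_deriv_le {G g : ℝ → ℝ} {T s : ℝ} (hT : 0 < T)
    (hG : ∀ x, T ≤ x → HasDerivAt G (g x) x) (hle : ∀ x, T ≤ x → x * g x ≤ s * G x)
    {t : ℝ} (ht : T ≤ t) : G t ≤ G T * (t / T) ^ s := by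
  have hder : ∀ x, T ≤ x →
      HasDerivAt (fun x => G x * x ^ (-s)) (x ^ (-s - 1) * (x * g x - s * G x)) x := by
    intro x hx
    have hx0 : 0 < x := hT.trans_le hx
    refine ((hG x hx).mul (Real.hasDerivAt_rpow_const (Or.inl hx0.ne'))).congr_deriv ?_
    rw [Real.rpow_sub_one hx0.ne']
    field_simp
    ring
  have hanti : AntitoneOn (fun x => G x * x ^ (-s)) (Ici T) := by
    refine antitoneOn_of_deriv_nonpos (convex_Ici T)
      (fun x hx => (hder x hx).continuousAt.continuousWithinAt)
      (fun x hx => (hder x (interior_subset hx)).differentiableAt.differentiableWithinAt) ?_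
    intro x hx
    have hx' : T ≤ x := interior_subset hx
    rw [(hder x hx').deriv]
    exact mul_nonpos_of_nonneg_of_nonpos (Real.rpow_nonneg (hT.trans_le hx').le _)
      (sub_nonpos.2 (hle x hx'))
  have ht0 : 0 < t := hT.trans_le ht
  have hts : 0 < t ^ s := Real.rpow_pos_of_pos ht0 s
  calc G t = G t * t ^ (-s) * t ^ s := by
        rw [Real.rpow_neg ht0.le, inv_mul_cancel_right₀ hts.ne']
    _ ≤ G T * T ^ (-s) * t ^ s := mul_le_mul_of_nonneg_right (hanti self_mem_Ici ht ht) hts.le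
    _ = G T * (t / T) ^ s := by
        rw [Real.div_rpow ht0.le hT.le, Real.rpow_neg hT.le]
        ring

lemma mul_div_rpow_le_of_le_mul_deriv {G g : ℝ → ℝ} {T s : ℝ} (hT : 0 < T)
    (hG : ∀ x, T ≤ x → HasDerivAt G (g x) x) (hle : ∀ x, T ≤ x → s * G x ≤ x * g x)
    {t : ℝ} (ht : T ≤ t) : G T * (t / T) ^ s ≤ G t := by
  have hneg := le_mul_div_rpow_of_mul_deriv_le (G := fun x => -G x) (g := fun x => -g x) (s := s)
    hT (fun x hx => (hG x hx).neg) (fun x hx => by linarith [hle x hx]) ht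
  linarith

lemma hasDerivAt_integral_of_continuousOn_Ici_s15 {h : ℝ → ℝ} {a t : ℝ} (hh : ContinuousOn h (Ici a))
    (ht : a < t) : HasDerivAt (fun t => ∫ τ in a..t, h τ) (h t) t := by
  refine intervalIntegral.integral_hasDerivAt_right ?_ ?_ (hh.continuousAt (Ici_mem_nhds ht))
  · exact (hh.mono Icc_subset_Ici_self).intervalIntegrable_of_Icc ht.le
  · exact (hh.mono Ioi_subset_Ici_self).stronglyMeasurableAtFilter isOpen_Ioi t ht

lemma exists_eventually_integral_le_mul_rpow {M : ℝ → ℝ} {θ : ℝ} (hM : ContinuousOn M (Ici 0))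
    (hθ : ∀ᶠ t in atTop, t * M t ≤ θ * ∫ τ in (0 : ℝ)..t, M τ) :
    ∃ C, ∀ᶠ t in atTop, ∫ τ in (0 : ℝ)..t, M τ ≤ C * t ^ θ := by
  obtain ⟨T, hT⟩ := (hθ.and (eventually_gt_atTop 0)).exists_forall_of_atTop
  have hT0 : 0 < T := (hT T le_rfl).2
  refine ⟨(∫ τ in (0 : ℝ)..T, M τ) / T ^ θ, ?_⟩
  filter_upwards [eventually_ge_atTop T] with t ht
  refine (le_mul_div_rpow_of_mul_deriv_le hT0
    (fun x hx => hasDerivAt_integral_of_continuousOn_Ici_s15 hM (hT x hx).2)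
    (fun x hx => (hT x hx).1) ht).trans_eq ?_
  rw [Real.div_rpow (hT t ht).2.le hT0.le]
  ring

lemma exists_eventually_integral_rpow_mul_le {M : ℝ → ℝ} {θ p A : ℝ}
    (hM : ContinuousOn M (Ici 0))
    (hθ : ∀ᶠ t in atTop, t * M t ≤ θ * ∫ τ in (0 : ℝ)..t, M τ) (hp : 0 < p) (hA : 0 < A) :
    ∃ C, ∀ᶠ t : ℝ in atTop, ∫ τ in (0 : ℝ)..(t ^ p * A), M τ ≤ C * t ^ (p * θ) := by
  obtain ⟨C, hC⟩ := exists_eventually_integral_le_mul_rpow hM hθ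
  refine ⟨C * A ^ θ, ?_⟩
  filter_upwards [((tendsto_rpow_atTop hp).atTop_mul_const hA).eventually hC,
    eventually_ge_atTop 0] with t ht ht0
  refine ht.trans_eq ?_
  rw [Real.mul_rpow (Real.rpow_nonneg ht0 p) hA.le, ← Real.rpow_mul ht0]
  ring

end Growth

section Primitive

variable {X : Type*} [MeasurableSpace X] {μ : Measure X} {f : X → ℝ → ℝ}

lemma stronglyMeasurable_integral_of_continuous (hfm : ∀ t, Measurable fun x => f x t)
    (hfc : ∀ x, Continuous (f x)) {u : X → ℝ} (hu : Measurable u) :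
    StronglyMeasurable fun x => ∫ τ in (0 : ℝ)..(u x), f x τ := by
  have hjoint : StronglyMeasurable (Function.uncurry fun (t : ℝ) x => f x t) :=
    stronglyMeasurable_uncurry_of_continuous_of_stronglyMeasurable hfc
      fun t => (hfm t).stronglyMeasurable
  have hscaled : StronglyMeasurable fun z : X × ℝ => f z.1 (u z.1 * z.2) :=
    hjoint.comp_measurable (g := fun z : X × ℝ => (u z.1 * z.2, z.1)) (by fun_prop)
  -- Rescaling to `∫₀¹` removes `x` from the domain of integration.
  have hrescale : (fun x => ∫ τ in (0 : ℝ)..(u x), f x τ)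
      = fun x => u x * ∫ s in Ioc (0 : ℝ) 1, f x (u x * s) := by
    funext x
    rw [← intervalIntegral.integral_of_le zero_le_one,
      intervalIntegral.mul_integral_comp_mul_left, mul_zero, mul_one]
  rw [hrescale]
  exact hu.stronglyMeasurable.mul hscaled.integral_prod_right'

lemma aestronglyMeasurable_integral_of_ae_continuous (hfm : ∀ t, Measurable fun x => f x t)
    (hfc : ∀ᵐ x ∂μ, Continuous (f x)) {u : X → ℝ} (hu : Measurable u) :
    AEStronglyMeasurable (fun x => ∫ τ in (0 : ℝ)..(u x), f x τ) μ := by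
  obtain ⟨S, hS, hSm, hS0⟩ := exists_measurable_superset_of_null (ae_iff.1 hfc)
  let g : X → ℝ → ℝ := Sᶜ.indicator f
  have hg_apply : ∀ t, (fun x => g x t) = Sᶜ.indicator fun x => f x t := by
    intro t
    funext x
    by_cases hx : x ∈ S <;> simp [g, hx]
  have hgm : ∀ t, Measurable fun x => g x t := fun t => by
    rw [hg_apply t]
    exact (hfm t).indicator hSm.compl
  have hgc : ∀ x, Continuous (g x) := by
    intro x
    by_cases hx : x ∈ S
    · simpa [g, hx] using continuous_zero
    · simpa [g, hx] using not_not.1 fun hcont => hx (hS hcont)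
  refine ⟨_, stronglyMeasurable_integral_of_continuous hgm hgc hu, ?_⟩
  filter_upwards [measure_eq_zero_iff_ae_notMem.1 hS0] with x hx
  simp [g, hx]

lemma exists_abs_integral_le_of_abs_le {g : ℝ → ℝ} (hg : Continuous g)
    (hfg : ∀ᵐ x ∂μ, ∀ t, |f x t| ≤ g t) (R : ℝ) :
    ∃ D, ∀ᵐ x ∂μ, ∀ s, |s| ≤ R → |∫ τ in (0 : ℝ)..s, f x τ| ≤ D := by
  obtain ⟨C, hC⟩ := (isCompact_Icc (a := -R) (b := R)).exists_bound_of_continuousOn hg.continuousOn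
  refine ⟨C * R, ?_⟩
  filter_upwards [hfg] with x hx s hs
  have hfC : ∀ τ, |τ| ≤ R → ‖f x τ‖ ≤ C := fun τ hτ =>
    (hx τ).trans ((le_abs_self _).trans (hC τ (abs_le.1 hτ)))
  have hC0 : 0 ≤ C := (norm_nonneg _).trans (hfC s hs)
  calc |∫ τ in (0 : ℝ)..s, f x τ| ≤ C * |s - 0| := by
        refine intervalIntegral.norm_integral_le_of_norm_le_const fun τ hτ => hfC τ ?_
        simpa using (abs_sub_left_of_mem_uIcc (uIoc_subset_uIcc hτ)).trans (by simpa using hs)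
    _ ≤ C * R := by
        rw [sub_zero]
        gcongr

lemma exists_rpow_sub_le_integral_of_ambrosetti_rabinowitz (hfc : ∀ᵐ x ∂μ, Continuous (f x))
    {g : ℝ → ℝ} (hg : Continuous g) (hfg : ∀ᵐ x ∂μ, ∀ t, |f x t| ≤ g t)
    {σ c t₀ : ℝ} (hσ : 0 < σ) (hc : 0 < c)
    (hAR : ∀ᵐ x ∂μ, ∀ t, t₀ ≤ t →
      c ≤ σ * (∫ τ in (0 : ℝ)..t, f x τ) ∧ σ * (∫ τ in (0 : ℝ)..t, f x τ) ≤ t * f x t) :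
    ∃ c₁ > 0, ∃ c₂, ∀ᵐ x ∂μ, ∀ s, 0 ≤ s → c₁ * s ^ σ - c₂ ≤ ∫ τ in (0 : ℝ)..s, f x τ := by
  let T := max t₀ 1
  have hT : 0 < T := lt_max_of_lt_right one_pos
  obtain ⟨D, hD⟩ := exists_abs_integral_le_of_abs_le hg hfg T
  refine ⟨c / σ / T ^ σ, by positivity, |D| + c / σ, ?_⟩
  filter_upwards [hfc, hD, hAR] with x hxc hxD hx s hs
  have hscale : c / σ / T ^ σ * s ^ σ = c / σ * (s / T) ^ σ := by
    rw [Real.div_rpow hs hT.le]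
    ring
  have hcσ : 0 < c / σ := div_pos hc hσ
  rw [hscale]
  rcases le_total s T with hsT | hTs
  · have hsmall : c / σ * (s / T) ^ σ ≤ c / σ :=
      mul_le_of_le_one_right hcσ.le
        (Real.rpow_le_one (by positivity) ((div_le_one hT).2 hsT) hσ.le)
    have hF := hxD s (by rwa [abs_of_nonneg hs])
    linarith [neg_le_of_abs_le hF, le_abs_self D]
  · have hFT : c / σ ≤ ∫ τ in (0 : ℝ)..T, f x τ := (div_le_iff₀' hσ).2 (hx T (le_max_left _ _)).1
    calc c / σ * (s / T) ^ σ - (|D| + c / σ) ≤ c / σ * (s / T) ^ σ := by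
          linarith [abs_nonneg D]
      _ ≤ (∫ τ in (0 : ℝ)..T, f x τ) * (s / T) ^ σ := by gcongr
      _ ≤ ∫ τ in (0 : ℝ)..s, f x τ :=
          mul_div_rpow_le_of_le_mul_deriv hT
            (fun t _ => (hxc.integral_hasStrictDerivAt 0 t).hasDerivAt)
            (fun t ht => (hx t ((le_max_left _ _).trans ht)).2) hTs

variable [TopologicalSpace X] [OpensMeasurableSpace X] [IsFiniteMeasureOnCompacts μ]

lemma integrable_integral_comp_of_hasCompactSupport (hfm : ∀ t, Measurable fun x => f x t)
    (hfc : ∀ᵐ x ∂μ, Continuous (f x)) {g : ℝ → ℝ} (hg : Continuous g)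
    (hfg : ∀ᵐ x ∂μ, ∀ t, |f x t| ≤ g t) {u : X → ℝ} (hu : Continuous u)
    (hucs : HasCompactSupport u) : Integrable (fun x => ∫ τ in (0 : ℝ)..(u x), f x τ) μ := by
  obtain ⟨R, hR⟩ := hucs.exists_bound_of_continuous hu
  obtain ⟨D, hD⟩ := exists_abs_integral_le_of_abs_le hg hfg R
  have hsupp : Function.support (fun x => ∫ τ in (0 : ℝ)..(u x), f x τ) ⊆ tsupport u := by
    intro x hx
    by_contra hxu
    exact hx (by simp [image_eq_zero_of_notMem_tsupport hxu])
  rw [← integrableOn_iff_integrable_of_support_subset hsupp]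
  refine IntegrableOn.of_bound hucs.isCompact.measure_lt_top
    (aestronglyMeasurable_integral_of_ae_continuous hfm hfc hu.measurable).restrict D ?_
  exact ae_restrict_of_ae (hD.mono fun x hx => hx _ (hR x))

lemma rpow_mul_integral_sub_le_integral_smul (hfm : ∀ t, Measurable fun x => f x t)
    (hfc : ∀ᵐ x ∂μ, Continuous (f x)) {g : ℝ → ℝ} (hg : Continuous g)
    (hfg : ∀ᵐ x ∂μ, ∀ t, |f x t| ≤ g t) {σ c₁ c₂ : ℝ} (hσ : 0 < σ)
    (hF : ∀ᵐ x ∂μ, ∀ s, 0 ≤ s → c₁ * s ^ σ - c₂ ≤ ∫ τ in (0 : ℝ)..s, f x τ)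
    {u : X → ℝ} (hu : Continuous u) (hucs : HasCompactSupport u) (hu0 : 0 ≤ u) {t : ℝ}
    (ht : 0 ≤ t) :
    c₁ * (∫ x, u x ^ σ ∂μ) * t ^ σ - c₂ * μ.real (tsupport u) ≤
      ∫ x, (∫ τ in (0 : ℝ)..((t • u) x), f x τ) ∂μ := by
  have hpow : Integrable (fun x => c₁ * t ^ σ * u x ^ σ) μ :=
    ((hu.rpow_const fun _ => Or.inr hσ.le).integrable_of_hasCompactSupport
      (hucs.comp_left (g := (· ^ σ)) (Real.zero_rpow hσ.ne'))).const_mul _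
  have hsupp : MeasurableSet (tsupport u) := (isClosed_tsupport u).measurableSet
  have hind : Integrable ((tsupport u).indicator fun _ => c₂) μ :=
    (integrable_indicator_iff hsupp).2 (integrableOn_const hucs.isCompact.measure_lt_top.ne)
  calc c₁ * (∫ x, u x ^ σ ∂μ) * t ^ σ - c₂ * μ.real (tsupport u)
      = ∫ x, (c₁ * t ^ σ * u x ^ σ - (tsupport u).indicator (fun _ => c₂) x) ∂μ := by
        rw [integral_sub hpow hind, integral_const_mul, integral_indicator_const _ hsupp,
          smul_eq_mul]
        ring
    _ ≤ ∫ x, (∫ τ in (0 : ℝ)..((t • u) x), f x τ) ∂μ := by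
        refine integral_mono_ae (hpow.sub hind) (integrable_integral_comp_of_hasCompactSupport
          hfm hfc hg hfg (hu.const_smul t) (hucs.smul_left (f := fun _ => t))) ?_
        filter_upwards [hF] with x hx
        by_cases hxu : x ∈ tsupport u
        · simpa [hxu, Real.mul_rpow ht (hu0 x), mul_assoc]
            using hx (t * u x) (mul_nonneg ht (hu0 x))
        · simp [hxu, image_eq_zero_of_notMem_tsupport hxu, Real.zero_rpow hσ.ne']

end Primitive

section TestFunction

lemma setIntegral_pos_of_tsupport_subset {X : Type*} [TopologicalSpace X] [MeasurableSpace X]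
    [OpensMeasurableSpace X] {μ : Measure X} [IsFiniteMeasureOnCompacts μ] [μ.IsOpenPosMeasure]
    {Ω : Set X} (hΩ : IsOpen Ω) {g : X → ℝ} (hg : ContinuousOn g Ω) (hgcs : HasCompactSupport g)
    (hgΩ : tsupport g ⊆ Ω) (hg0 : 0 ≤ g) {x : X} (hx : g x ≠ 0) : 0 < ∫ x in Ω, g x ∂μ := by
  rw [setIntegral_eq_integral_of_forall_compl_eq_zero fun y hy =>
    image_eq_zero_of_notMem_tsupport fun hyg => hy (hgΩ hyg)]
  exact (hg.continuous_of_tsupport_subset hΩ hgΩ).integral_pos_of_hasCompactSupport_nonneg_nonzero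
    hgcs hg0 hx

variable {E : Type*} [NormedAddCommGroup E] [NormedSpace ℝ E] {u : E → ℝ}

lemma exists_fderiv_ne_zero_of_hasCompactSupport [Nontrivial E] (hu : Differentiable ℝ u)
    (hucs : HasCompactSupport u) (hune : u ≠ 0) : ∃ y, fderiv ℝ u y ≠ 0 := by
  by_contra! hzero
  obtain ⟨x, hx⟩ := Function.ne_iff.1 hune
  obtain ⟨z, hz⟩ := (ne_univ_iff_exists_notMem _).1 hucs.isCompact.ne_univ
  exact hx ((is_const_of_fderiv_eq_zero hu hzero x z).trans (image_eq_zero_of_notMem_tsupport hz))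

variable [MeasurableSpace E] {μ : Measure E}

lemma integral_mul_norm_fderiv_smul_rpow (hu : Differentiable ℝ u) (b : E → ℝ) (p : ℝ) {t : ℝ}
    (ht : 0 ≤ t) :
    ∫ x, b x * ‖fderiv ℝ (t • u) x‖ ^ p ∂μ = t ^ p * ∫ x, b x * ‖fderiv ℝ u x‖ ^ p ∂μ := by
  rw [← integral_const_mul]
  congr with x
  rw [fderiv_const_smul (hu x), norm_smul, Real.norm_of_nonneg ht,
    Real.mul_rpow ht (norm_nonneg _), mul_left_comm]

lemma integral_norm_fderiv_smul_rpow (hu : Differentiable ℝ u) (p : ℝ) {t : ℝ} (ht : 0 ≤ t) :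
    ∫ x, ‖fderiv ℝ (t • u) x‖ ^ p ∂μ = t ^ p * ∫ x, ‖fderiv ℝ u x‖ ^ p ∂μ := by
  simpa only [one_mul] using integral_mul_norm_fderiv_smul_rpow (μ := μ) hu (fun _ => 1) p ht

lemma setIntegral_mul_norm_fderiv_rpow_pos [Nontrivial E] [OpensMeasurableSpace E]
    [IsFiniteMeasureOnCompacts μ] [μ.IsOpenPosMeasure] {Ω : Set E} (hΩ : IsOpen Ω)
    (hu : ContDiff ℝ 1 u) (hucs : HasCompactSupport u) (huΩ : tsupport u ⊆ Ω) (hune : u ≠ 0)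
    {b : E → ℝ} (hb : ContinuousOn b Ω) (hbpos : ∀ x ∈ tsupport u, 0 < b x) {p : ℝ} (hp : 0 < p) :
    0 < ∫ x in Ω, b x * ‖fderiv ℝ u x‖ ^ p ∂μ := by
  obtain ⟨y, hy⟩ :=
    exists_fderiv_ne_zero_of_hasCompactSupport (hu.differentiable one_ne_zero) hucs hune
  have hyu : y ∈ tsupport u := support_fderiv_subset ℝ hy
  have hzero : ∀ x, x ∉ tsupport u → ‖fderiv ℝ u x‖ ^ p = 0 := fun x hx => by
    rw [fderiv_of_notMem_tsupport ℝ hx, norm_zero, Real.zero_rpow hp.ne']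
  have hsupp : tsupport (fun x => b x * ‖fderiv ℝ u x‖ ^ p) ⊆ tsupport u :=
    closure_minimal (Function.support_subset_iff'.2 fun x hx => by rw [hzero x hx, mul_zero])
      (isClosed_tsupport u)
  refine setIntegral_pos_of_tsupport_subset hΩ ?_ (hucs.of_isClosed_subset isClosed_closure hsupp)
    (hsupp.trans huΩ) (fun x => ?_) (x := y)
    (mul_pos (hbpos y hyu) (Real.rpow_pos_of_pos (norm_pos_iff.2 hy) p)).ne'
  · exact hb.mul
      ((hu.continuous_fderiv one_ne_zero).norm.rpow_const fun _ => Or.inr hp.le).continuousOn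
  · by_cases hx : x ∈ tsupport u
    · exact mul_nonneg (hbpos x hx).le (Real.rpow_nonneg (norm_nonneg _) p)
    · simp only [hzero x hx, mul_zero, Pi.zero_apply, le_refl]

lemma exists_contDiff_setIntegral_pos [FiniteDimensional ℝ E] [Nontrivial E]
    [OpensMeasurableSpace E] (μ : Measure E) [IsFiniteMeasureOnCompacts μ] [μ.IsOpenPosMeasure]
    {Ω : Set E} (hΩ : IsOpen Ω) {a : E → ℝ} (ha : ContinuousOn a Ω) (hapos : ∃ x ∈ Ω, 0 < a x)
    {p q σ : ℝ} (hp : 0 < p) (hq : 0 < q) (hσ : 0 < σ) :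
    ∃ u : E → ℝ, ContDiff ℝ (⊤ : ℕ∞) u ∧ HasCompactSupport u ∧ tsupport u ⊆ Ω ∧ 0 ≤ u ∧
      0 < ∫ x in Ω, ‖fderiv ℝ u x‖ ^ p ∂μ ∧ 0 < ∫ x in Ω, a x * ‖fderiv ℝ u x‖ ^ q ∂μ ∧
      0 < ∫ x in Ω, u x ^ σ ∂μ := by
  obtain ⟨x₀, hx₀, hax₀⟩ := hapos
  have hU : Ω ∩ a ⁻¹' Ioi 0 ∈ nhds x₀ :=
    (ha.isOpen_inter_preimage hΩ isOpen_Ioi).mem_nhds ⟨hx₀, hax₀⟩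
  obtain ⟨u, husupp, hucs, husm, hurange, hux₀⟩ := exists_contDiff_tsupport_subset (n := ⊤) hU
  have hu0 : 0 ≤ u := fun x => (hurange (mem_range_self x)).1
  have huΩ : tsupport u ⊆ Ω := husupp.trans inter_subset_left
  have hune : u ≠ 0 := fun h => by simp [h] at hux₀
  have hu1 : ContDiff ℝ 1 u := husm.of_le (mod_cast le_top)
  refine ⟨u, husm, hucs, huΩ, hu0, ?_, ?_, ?_⟩
  · simpa only [one_mul] using setIntegral_mul_norm_fderiv_rpow_pos (μ := μ) hΩ hu1 hucs huΩ hune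
      (b := fun _ => 1) continuousOn_const (fun _ _ => one_pos) hp
  · exact setIntegral_mul_norm_fderiv_rpow_pos hΩ hu1 hucs huΩ hune ha
      (fun x hx => (husupp hx).2) hq
  · have hzero : (0 : ℝ) ^ σ = 0 := Real.zero_rpow hσ.ne'
    exact setIntegral_pos_of_tsupport_subset hΩ
      (hu1.continuous.rpow_const fun _ => Or.inr hσ.le).continuousOn
      (hucs.comp_left (g := (· ^ σ)) hzero)
      ((tsupport_comp_subset (g := (· ^ σ)) hzero u).trans huΩ)
      (fun x => Real.rpow_nonneg (hu0 x) σ) (x := x₀) (by simp [hux₀])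

end TestFunction

section Energy

variable {E : Type*} [NormedAddCommGroup E] [NormedSpace ℝ E] [MeasurableSpace E]
  {a : E → ℝ} {M : ℝ → ℝ} {f : E → ℝ → ℝ} {g : ℝ → ℝ} {p q θ σ c t₀ : ℝ}

/-- The energy `I(u) = (1/p) 𝓜(‖∇u‖_p^p) + (1/q) 𝓜(‖∇u‖_{q,a}^q) - ∫ F(x, u) dμ` of the double phase
Kirchhoff problem, where `𝓜` and `F(x, ·)` are the primitives of `M` and `f x` vanishing at `0`.
The domain `Ω` enters through `μ`, which is to be the restriction of a measure to `Ω`. -/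
noncomputable def doublePhaseEnergy (μ : Measure E) (p q : ℝ) (a : E → ℝ) (M : ℝ → ℝ)
    (f : E → ℝ → ℝ) (u : E → ℝ) : ℝ :=
  (1 / p) * (∫ τ in (0 : ℝ)..(∫ x, ‖fderiv ℝ u x‖ ^ p ∂μ), M τ)
    + (1 / q) * (∫ τ in (0 : ℝ)..(∫ x, a x * ‖fderiv ℝ u x‖ ^ q ∂μ), M τ)
    - ∫ x, (∫ τ in (0 : ℝ)..(u x), f x τ) ∂μ

theorem tendsto_doublePhaseEnergy_smul_atBot [OpensMeasurableSpace E] {μ : Measure E}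
    [IsFiniteMeasureOnCompacts μ] (hp : 0 < p) (hq : 0 < q) (hσ : 0 < σ) (hpσ : p * θ < σ)
    (hqσ : q * θ < σ) (hM : ContinuousOn M (Ici 0))
    (hMθ : ∀ᶠ t in atTop, t * M t ≤ θ * ∫ τ in (0 : ℝ)..t, M τ)
    (hfm : ∀ t, Measurable fun x => f x t) (hfc : ∀ᵐ x ∂μ, Continuous (f x))
    (hg : Continuous g) (hfg : ∀ᵐ x ∂μ, ∀ t, |f x t| ≤ g t) (hc : 0 < c)
    (hAR : ∀ᵐ x ∂μ, ∀ t, t₀ ≤ t →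
      c ≤ σ * (∫ τ in (0 : ℝ)..t, f x τ) ∧ σ * (∫ τ in (0 : ℝ)..t, f x τ) ≤ t * f x t)
    {u : E → ℝ} (hu : Differentiable ℝ u) (hucs : HasCompactSupport u) (hu0 : 0 ≤ u)
    (hup : 0 < ∫ x, ‖fderiv ℝ u x‖ ^ p ∂μ) (huq : 0 < ∫ x, a x * ‖fderiv ℝ u x‖ ^ q ∂μ)
    (huσ : 0 < ∫ x, u x ^ σ ∂μ) :
    Tendsto (fun t : ℝ => doublePhaseEnergy μ p q a M f (t • u)) atTop atBot := by
  obtain ⟨kp, hkp⟩ := exists_eventually_integral_rpow_mul_le hM hMθ hp hup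
  obtain ⟨kq, hkq⟩ := exists_eventually_integral_rpow_mul_le hM hMθ hq huq
  obtain ⟨c₁, hc₁, c₂, hF⟩ :=
    exists_rpow_sub_le_integral_of_ambrosetti_rabinowitz hfc hg hfg hσ hc hAR
  refine tendsto_atBot_mono' _ ?_ (tendsto_rpow_add_rpow_add_const_sub_rpow_atBot hpσ hqσ hσ
    (mul_pos hc₁ huσ) (1 / p * kp) (1 / q * kq) (c₂ * μ.real (tsupport u)))
  filter_upwards [hkp, hkq, eventually_ge_atTop 0] with t htp htq ht
  have hFt := rpow_mul_integral_sub_le_integral_smul hfm hfc hg hfg hσ hF hu.continuous hucs hu0 ht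
  rw [doublePhaseEnergy, integral_norm_fderiv_smul_rpow hu p ht,
    integral_mul_norm_fderiv_smul_rpow hu a q ht]
  have hp_term := mul_le_mul_of_nonneg_left htp (one_div_pos.2 hp).le
  have hq_term := mul_le_mul_of_nonneg_left htq (one_div_pos.2 hq).le
  linarith

theorem stmt_15_general [FiniteDimensional ℝ E] [Nontrivial E] [OpensMeasurableSpace E]
    (μ : Measure E) [IsFiniteMeasureOnCompacts μ] [μ.IsOpenPosMeasure] {Ω : Set E} (hΩ : IsOpen Ω)
    (hp : 0 < p) (hq : 0 < q) (hσ : 0 < σ) (hpσ : p * θ < σ) (hqσ : q * θ < σ)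
    (ha : ContinuousOn a Ω) (hapos : ∃ x ∈ Ω, 0 < a x) (hM : ContinuousOn M (Ici 0))
    (hMθ : ∀ᶠ t in atTop, t * M t ≤ θ * ∫ τ in (0 : ℝ)..t, M τ)
    (hfm : ∀ t, Measurable fun x => f x t) (hfc : ∀ᵐ x ∂μ.restrict Ω, Continuous (f x))
    (hg : Continuous g) (hfg : ∀ᵐ x ∂μ.restrict Ω, ∀ t, |f x t| ≤ g t) (hc : 0 < c)
    (hAR : ∀ᵐ x ∂μ.restrict Ω, ∀ t, t₀ ≤ t →
      c ≤ σ * (∫ τ in (0 : ℝ)..t, f x τ) ∧ σ * (∫ τ in (0 : ℝ)..t, f x τ) ≤ t * f x t) :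
    ∃ e : E → ℝ, (ContDiff ℝ (⊤ : ℕ∞) e ∧ HasCompactSupport e ∧ tsupport e ⊆ Ω) ∧
      doublePhaseEnergy (μ.restrict Ω) p q a M f e < 0 ∧
      1 ≤ (∫ x in Ω, ‖fderiv ℝ e x‖ ^ p ∂μ) ^ (1 / p) ∧
      1 ≤ (∫ x in Ω, a x * ‖fderiv ℝ e x‖ ^ q ∂μ) ^ (1 / q) := by
  obtain ⟨u, husm, hucs, huΩ, hu0, hup, huq, huσ⟩ :=
    exists_contDiff_setIntegral_pos μ hΩ ha hapos hp hq hσ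
  have hud : Differentiable ℝ u := husm.differentiable (by simp)
  have henergy := tendsto_doublePhaseEnergy_smul_atBot hp hq hσ hpσ hqσ hM hMθ hfm hfc hg hfg hc
    hAR hud hucs hu0 hup huq huσ
  obtain ⟨t, ht, htneg, htp, htq⟩ := ((eventually_ge_atTop (0 : ℝ)).and
    ((henergy.eventually_lt_atBot 0).and
    ((((tendsto_rpow_atTop hp).atTop_mul_const hup).eventually_ge_atTop 1).and
    (((tendsto_rpow_atTop hq).atTop_mul_const huq).eventually_ge_atTop 1)))).exists
  refine ⟨t • u, ⟨husm.const_smul t, hucs.smul_left (f := fun _ => t),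
    (tsupport_smul_subset_right (fun _ => t) u).trans huΩ⟩, htneg, ?_, ?_⟩
  · rw [integral_norm_fderiv_smul_rpow hud p ht]
    exact Real.one_le_rpow htp (one_div_pos.2 hp).le
  · rw [integral_mul_norm_fderiv_smul_rpow hud a q ht]
    exact Real.one_le_rpow htq (one_div_pos.2 hq).le

end Energy

lemma exists_pos_of_not_ae_eq_zero {X : Type*} [MeasurableSpace X] {μ : Measure X} {Ω : Set X}
    (hΩ : MeasurableSet Ω) {a : X → ℝ} (ha0 : ∀ x ∈ Ω, 0 ≤ a x)
    (hane : ¬ a =ᵐ[μ.restrict Ω] 0) : ∃ x ∈ Ω, 0 < a x := by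
  contrapose! hane
  exact ae_restrict_of_forall_mem hΩ fun x hx => (hane x hx).antisymm (ha0 x hx)

lemma continuous_const_mul_abs_rpow_add_const_mul_abs_rpow {α β : ℝ} (hα : 0 ≤ α) (hβ : 0 ≤ β)
    (A B : ℝ) : Continuous fun t : ℝ => A * |t| ^ α + B * |t| ^ β :=
  ((continuous_abs.rpow_const fun _ => Or.inr hα).const_mul A).add
    ((continuous_abs.rpow_const fun _ => Or.inr hβ).const_mul B)

/-- Lemma 4.2: under `(M₁)`, `(M₂)`, `(f₁)`, `(f₂)`, and `a` not a.e. zero on `Ω`,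
there exists `e ∈ C_c^∞(Ω)` with `I(e) < 0`, `‖∇e‖_p ≥ 1` and `‖∇e‖_{q,a} ≥ 1`, where
`I(u) = (1/p)𝓜(‖∇u‖_p^p) + (1/q)𝓜(‖∇u‖_{q,a}^q) − ∫_Ω F(x,u)dx`. -/
theorem stmt_15 {N : ℕ} (hN : 2 ≤ N) (Ω : Set (EuclideanSpace ℝ (Fin N)))
    (hΩo : IsOpen Ω) (hΩne : Ω.Nonempty) (hΩbd : Bornology.IsBounded Ω)
    (hΩlip : HasLipschitzBoundary Ω)
    (p q : ℝ) (hp : 1 < p) (hpq : p < q) (hqN : q < N) (hpqN : q / p < 1 + 1 / N)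
    (a : EuclideanSpace ℝ (Fin N) → ℝ) (Ka : ℝ≥0)
    (haLip : LipschitzOnWith Ka a (closure Ω)) (ha0 : ∀ x ∈ closure Ω, 0 ≤ a x)
    (hane : ¬ (a =ᵐ[volume.restrict Ω] 0))
    -- (M₁)
    (M : ℝ → ℝ) (hMc : ContinuousOn M (Set.Ici 0)) (hM0 : ∀ t, 0 ≤ t → 0 ≤ M t)
    (θ : ℝ) (hθ1 : 1 ≤ θ) (hθ2 : θ < (N * p / (N - p)) / q)
    (hM1 : ∀ t, 0 ≤ t → t * M t ≤ θ * ∫ τ in (0:ℝ)..t, M τ)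
    -- (M₂)
    (hM2 : ∀ τ : ℝ, 0 < τ → ∃ κ > (0:ℝ), ∀ t, τ ≤ t → κ ≤ M t)
    -- f Carathéodory
    (f : EuclideanSpace ℝ (Fin N) → ℝ → ℝ)
    (hfmeas : ∀ t : ℝ, Measurable fun x => f x t)
    (hfcont : ∀ᵐ x ∂(volume.restrict Ω), Continuous (f x))
    -- (f₁)
    (r : ℝ) (hr1 : q * θ < r) (hr2 : r < N * p / (N - p))
    (hf1 : ∀ ε > (0:ℝ), ∃ δ > (0:ℝ), ∀ᵐ x ∂(volume.restrict Ω), ∀ t : ℝ,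
      |f x t| ≤ q * θ * ε * |t| ^ (q * θ - 1) + r * δ * |t| ^ (r - 1))
    -- (f₂)
    (σ c t₀ : ℝ) (hσ1 : q * θ < σ) (hσ2 : σ < N * p / (N - p)) (hcpos : 0 < c)
    (ht₀ : 0 ≤ t₀)
    (hf2 : ∀ᵐ x ∂(volume.restrict Ω), ∀ t : ℝ, t₀ ≤ |t| →
      c ≤ σ * (∫ τ in (0:ℝ)..t, f x τ) ∧ σ * (∫ τ in (0:ℝ)..t, f x τ) ≤ t * f x t) :
    ∃ e : EuclideanSpace ℝ (Fin N) → ℝ, CcInfty Ω e ∧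
      (1 / p) * (∫ τ in (0:ℝ)..(∫ x in Ω, ‖fderiv ℝ e x‖ ^ p), M τ)
        + (1 / q) * (∫ τ in (0:ℝ)..(∫ x in Ω, a x * ‖fderiv ℝ e x‖ ^ q), M τ)
        - (∫ x in Ω, ∫ τ in (0:ℝ)..(e x), f x τ) < 0 ∧
      1 ≤ (∫ x in Ω, ‖fderiv ℝ e x‖ ^ p) ^ (1 / p) ∧
      1 ≤ (∫ x in Ω, a x * ‖fderiv ℝ e x‖ ^ q) ^ (1 / q) := by
  have : Nonempty (Fin N) := ⟨⟨0, by omega⟩⟩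
  have hqθ : q ≤ q * θ := le_mul_of_one_le_right (by linarith) hθ1
  have hpθ : p * θ ≤ q * θ := by gcongr
  obtain ⟨δ, -, hfδ⟩ := hf1 1 one_pos
  exact stmt_15_general volume hΩo (by linarith) (by linarith) (by linarith)
    (hpθ.trans_lt hσ1) hσ1 (haLip.continuousOn.mono subset_closure)
    (exists_pos_of_not_ae_eq_zero hΩo.measurableSet (fun x hx => ha0 x (subset_closure hx)) hane)
    hMc ((eventually_ge_atTop 0).mono hM1) hfmeas hfcont
    (continuous_const_mul_abs_rpow_add_const_mul_abs_rpow (by linarith) (by linarith) _ _) hfδ hcpos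
    (hf2.mono fun x hx t ht => hx t (ht.trans (le_abs_self t)))
end
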